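/- arXiv:2002.02384 — 5 statements merged into one kernel-verified Lean document; each statement's English description precedes it below -/
import Mathlib

section
/- If f ∈ 𝒟_L, then f² ∈ 𝒟_L and L(f²) = σ² (f′)² + 2 f · Lf. -/
/-!
Write `g = e^Σ f'`. Since `(f²)' = 2 f f'`, we have `e^Σ (f²)' = 2 f g`, a product of `C¹` functions,
so `f²` lies in the domain although `Σ` itself need not be differentiable. The product rule gives
`(2 f g)' = 2 f' g + 2 f g'`; multiplying by `e^{-Σ} σ²/2` turns the first term into `σ² (f')²` and
the second into `2 f · L f`.
-/

open Real MeasureTheory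

/-- The operator `L f = (e^Σ f')' e^{-Σ} σ²/2`. -/
noncomputable def Lop (sigma Sig f : ℝ → ℝ) : ℝ → ℝ :=
  fun x => deriv (fun y => Real.exp (Sig y) * deriv f y) x * Real.exp (-Sig x) * sigma x ^ 2 / 2

/-- Membership in the domain `𝒟_L`: `f` is `C¹` and `e^Σ f'` is `C¹`. -/
def memDL (Sig f : ℝ → ℝ) : Prop :=
  ContDiff ℝ 1 f ∧ ContDiff ℝ 1 (fun x => Real.exp (Sig x) * deriv f x)

theorem square_mem_domain_and_L_of_square
    (sigma Sig : ℝ → ℝ) (hsigmac : Continuous sigma) (hSigc : Continuous Sig)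
    (hsigma : ∀ x, 0 < sigma x)
    (f : ℝ → ℝ) (hf : memDL Sig f) :
    memDL Sig (fun x => f x ^ 2) ∧
    ∀ x, Lop sigma Sig (fun y => f y ^ 2) x
      = sigma x ^ 2 * (deriv f x) ^ 2 + 2 * f x * Lop sigma Sig f x := by
  obtain ⟨hf1, hg1⟩ := hf
  have hfd : Differentiable ℝ f := hf1.differentiable one_ne_zero
  have hgd : Differentiable ℝ (fun x => Real.exp (Sig x) * deriv f x) :=
    hg1.differentiable one_ne_zero
  have key : (fun y => Real.exp (Sig y) * deriv (fun z => f z ^ 2) y)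
      = fun y => (2 * f y) * (Real.exp (Sig y) * deriv f y) := by
    funext y
    have h : deriv (fun z => f z ^ 2) y = 2 * f y * deriv f y := by
      simpa using ((hfd y).hasDerivAt.fun_pow 2).deriv
    rw [h]
    ring
  refine ⟨⟨hf1.pow 2, ?_⟩, fun x => ?_⟩
  · rw [key]
    exact (contDiff_const.mul hf1).mul hg1
  · have hd := (((hfd x).hasDerivAt.const_mul 2).mul (hgd x).hasDerivAt).deriv
    have hd' : deriv (fun y => (2 * f y) * (Real.exp (Sig y) * deriv f y)) x
        = 2 * deriv f x * (Real.exp (Sig x) * deriv f x)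
          + 2 * f x * deriv (fun y => Real.exp (Sig y) * deriv f y) x := hd
    have he : Real.exp (Sig x) * Real.exp (-Sig x) = 1 := by
      rw [← Real.exp_add, add_neg_cancel, Real.exp_zero]
    simp only [Lop]
    rw [key, hd']
    linear_combination (deriv f x) ^ 2 * sigma x ^ 2 * he
end

section
/- Under the non-explosion condition, a function f ∈ C¹(ℝ) belongs to 𝒟_L if and only if f ∘ h⁻¹ belongs to C²(ℝ), where h⁻¹ is the inverse of the L-harmonic function h. -/
/-!
By the fundamental theorem of calculus `h` is `C¹` with derivative `e^{-Σ} > 0`, so `h` is a strictly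
increasing bijection; its inverse is therefore continuous, hence `C¹` with derivative
`e^{Σ ∘ h⁻¹}` by the inverse function theorem. The chain rule gives
`(f ∘ h⁻¹)' = (e^Σ f') ∘ h⁻¹`. Thus `f ∘ h⁻¹` is `C²` iff `(e^Σ f') ∘ h⁻¹` is `C¹`, and since `h` and
`h⁻¹` are both `C¹`, this holds iff `e^Σ f'` is `C¹`.
-/

open Real MeasureTheory

/-- A function with an everywhere defined continuous derivative is `C¹`. -/
lemma contDiff_one_of_hasDerivAt {u u' : ℝ → ℝ} (hu : ∀ x, HasDerivAt u (u' x) x)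
    (hc : Continuous u') : ContDiff ℝ 1 u := by
  rw [contDiff_one_iff_deriv]
  refine ⟨fun x => (hu x).differentiableAt, ?_⟩
  rwa [show deriv u = u' from funext fun x => (hu x).deriv]

theorem mem_domain_iff_comp_harmonic_inv_C2
    (sigma Sig : ℝ → ℝ) (hsigmac : Continuous sigma) (hSigc : Continuous Sig)
    (hsigma : ∀ x, 0 < sigma x)
    -- non-explosion condition
    (hne₁ : ∫⁻ x in Set.Iic (0:ℝ), ENNReal.ofReal (Real.exp (-Sig x)) = ⊤)
    (hne₂ : ∫⁻ x in Set.Ici (0:ℝ), ENNReal.ofReal (Real.exp (-Sig x)) = ⊤)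
    (h : ℝ → ℝ) (hh : ∀ x, h x = ∫ y in (0:ℝ)..x, Real.exp (-Sig y))
    (hinv : ℝ → ℝ) (hli : Function.LeftInverse hinv h) (hri : Function.RightInverse hinv h)
    (f : ℝ → ℝ) (hf : ContDiff ℝ 1 f) :
    memDL Sig f ↔ ContDiff ℝ 2 (f ∘ hinv) := by
  have hcont : Continuous fun y => Real.exp (-Sig y) := by fun_prop
  have hder : ∀ x, HasDerivAt h (Real.exp (-Sig x)) x := fun x => by
    rw [funext hh]
    exact hcont.integral_hasStrictDerivAt 0 x |>.hasDerivAt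
  have hmono : StrictMono h := strictMono_of_hasDerivAt_pos hder fun x => Real.exp_pos _
  have hinvc : Continuous hinv :=
    (hmono.orderIsoOfRightInverse h hinv hri).symm.continuous
  have hinvder : ∀ x, HasDerivAt hinv (Real.exp (Sig (hinv x))) x := fun x => by
    have := HasDerivAt.of_local_left_inverse hinvc.continuousAt (hder (hinv x))
      (Real.exp_ne_zero _) (Filter.Eventually.of_forall hri)
    rwa [Real.exp_neg, inv_inv] at this
  have hC1 : ContDiff ℝ 1 h := contDiff_one_of_hasDerivAt hder hcont
  have hinvC1 : ContDiff ℝ 1 hinv := contDiff_one_of_hasDerivAt hinvder (by fun_prop)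
  set g : ℝ → ℝ := fun x => Real.exp (Sig x) * deriv f x with hg
  have hcomp : ∀ x, HasDerivAt (f ∘ hinv) ((g ∘ hinv) x) x := fun x => by
    have := (hf.differentiable one_ne_zero (hinv x)).hasDerivAt.comp x (hinvder x)
    rwa [mul_comm] at this
  have hderiv : deriv (f ∘ hinv) = g ∘ hinv := funext fun x => (hcomp x).deriv
  rw [show (2 : WithTop ℕ∞) = 1 + 1 from one_add_one_eq_two.symm, contDiff_succ_iff_deriv, hderiv]
  constructor
  · rintro ⟨-, hgC1⟩
    exact ⟨fun x => (hcomp x).differentiableAt, by simp, hgC1.comp hinvC1⟩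
  · rintro ⟨-, -, hgC1⟩
    refine ⟨hf, ?_⟩
    have := hgC1.comp hC1
    rwa [Function.comp_assoc, hli.comp_eq_id, Function.comp_id] at this
end

section
/- Assume the non-explosion condition. Let g ∈ 𝒟_L be a C¹-diffeomorphism of ℝ onto ℝ with g′(x) > 0 for all x, and let f ∈ C¹(ℝ). Then f belongs to 𝒟_L if and only if f ∘ g⁻¹ belongs to C²(ℝ). -/
/-!
With `u = e^Σ f'` and `v = e^Σ g' > 0`, the chain rule gives
`(f ∘ g⁻¹)' = (f' / g') ∘ g⁻¹ = (u / v) ∘ g⁻¹`: the weight `e^Σ`, which is merely continuous,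
cancels in the quotient. Since `v`, `g` and `g⁻¹` are `C¹`, the function `u` is `C¹` if and only
if `(f ∘ g⁻¹)'` is `C¹`, the converse direction using `u = v · ((f ∘ g⁻¹)' ∘ g)`.
-/

open Real MeasureTheory

theorem deriv_comp_inv (f g ginv : ℝ → ℝ) (hf : Differentiable ℝ f)
    (hg : Differentiable ℝ g) (hginv : Differentiable ℝ ginv) (hg' : ∀ x, 0 < deriv g x)
    (hri : Function.RightInverse ginv g) (y : ℝ) :
    deriv (f ∘ ginv) y = deriv f (ginv y) / deriv g (ginv y) := by
  have hid : deriv g (ginv y) * deriv ginv y = 1 := by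
    rw [← deriv_comp y (hg _) (hginv y), hri.comp_eq_id, deriv_id]
  rw [deriv_comp y (hf _) (hginv y), eq_div_iff (hg' _).ne']
  linear_combination deriv f (ginv y) * hid

theorem mem_domain_iff_comp_diffeo_inv_C2
    (sigma Sig : ℝ → ℝ) (hsigmac : Continuous sigma) (hSigc : Continuous Sig)
    (hsigma : ∀ x, 0 < sigma x)
    -- non-explosion condition
    (hne₁ : ∫⁻ x in Set.Iic (0:ℝ), ENNReal.ofReal (Real.exp (-Sig x)) = ⊤)
    (hne₂ : ∫⁻ x in Set.Ici (0:ℝ), ENNReal.ofReal (Real.exp (-Sig x)) = ⊤)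
    -- g is a C¹-diffeomorphism of ℝ onto ℝ belonging to 𝒟_L, with g' > 0
    (g : ℝ → ℝ) (hg : memDL Sig g) (hgbij : Function.Bijective g)
    (hg' : ∀ x, 0 < deriv g x)
    (ginv : ℝ → ℝ) (hli : Function.LeftInverse ginv g)
    (hri : Function.RightInverse ginv g) (hginv : ContDiff ℝ 1 ginv)
    (f : ℝ → ℝ) (hf : ContDiff ℝ 1 f) :
    memDL Sig f ↔ ContDiff ℝ 2 (f ∘ ginv) := by
  have hfd := hf.differentiable one_ne_zero
  have hgd := hg.1.differentiable one_ne_zero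
  have hid := hginv.differentiable one_ne_zero
  have hder := deriv_comp_inv f g ginv hfd hgd hid hg' hri
  have hC2 : ContDiff ℝ 2 (f ∘ ginv) ↔ ContDiff ℝ 1 (deriv (f ∘ ginv)) := by
    rw [← one_add_one_eq_two, contDiff_succ_iff_deriv]
    simp [hfd.comp hid]
  rw [hC2]
  constructor
  · intro h
    have hquot := (h.2.div hg.2 fun x => (mul_pos (exp_pos (Sig x)) (hg' x)).ne').comp hginv
    have heq : deriv (f ∘ ginv) =
        ((fun x => exp (Sig x) * deriv f x) / fun x => exp (Sig x) * deriv g x) ∘ ginv := by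
      funext y
      rw [hder]
      exact (mul_div_mul_left _ _ (exp_pos (Sig (ginv y))).ne').symm
    rwa [heq]
  · intro h
    have heq : (fun x => exp (Sig x) * deriv f x) =
        fun x => exp (Sig x) * deriv g x * (deriv (f ∘ ginv) ∘ g) x := by
      funext x
      have hx := (hg' x).ne'
      simp only [Function.comp_apply, hder, hli x]
      field_simp
    refine ⟨hf, ?_⟩
    rw [heq]
    exact hg.2.mul (h.comp hg.1)
end

section
/- Assume the non-explosion condition. Let g ∈ 𝒟_L be a C¹-diffeomorphism of ℝ onto ℝ with g′(x) > 0 for all x, and let f ∈ 𝒟_L. Define σ₀^g := (σ g′) ∘ g⁻¹. Then for every y ∈ ℝ, (Lf)(g⁻¹(y)) = (1/2)(σ₀^g(y))² (f ∘ g⁻¹)″(y) + (Lg)(g⁻¹(y)) (f ∘ g⁻¹)′(y); that is, Lf ∘ g⁻¹ = L^Y (f ∘ g⁻¹) where L^Y v := (1/2)(σ₀^g)² v″ + ((Lg) ∘ g⁻¹) v′. -/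
/-!
Write `F = e^Σ f'` and `G = e^Σ g'`, both `C¹` by membership in `𝒟_L`. Neither `f'` nor `g'` need be
differentiable, but the exponential factor cancels in the quotient
`(f ∘ g⁻¹)' = (f' / g') ∘ g⁻¹ = (F / G) ∘ g⁻¹`, so `f ∘ g⁻¹` is twice differentiable with
`(f ∘ g⁻¹)'' = ((F' G - F G') / (G² g')) ∘ g⁻¹`. The identity is then an algebraic consequence of
`G = e^Σ g'` and `Lf = F' e^{-Σ} σ² / 2`, `Lg = G' e^{-Σ} σ² / 2`.
-/

open Real MeasureTheory

theorem L_comp_diffeo_inv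
    (sigma Sig : ℝ → ℝ) (hsigmac : Continuous sigma) (hSigc : Continuous Sig)
    (hsigma : ∀ x, 0 < sigma x)
    -- non-explosion condition
    (hne₁ : ∫⁻ x in Set.Iic (0:ℝ), ENNReal.ofReal (Real.exp (-Sig x)) = ⊤)
    (hne₂ : ∫⁻ x in Set.Ici (0:ℝ), ENNReal.ofReal (Real.exp (-Sig x)) = ⊤)
    -- g is a C¹-diffeomorphism of ℝ onto ℝ belonging to 𝒟_L, with g' > 0
    (g : ℝ → ℝ) (hg : memDL Sig g) (hgbij : Function.Bijective g)
    (hg' : ∀ x, 0 < deriv g x)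
    (ginv : ℝ → ℝ) (hli : Function.LeftInverse ginv g)
    (hri : Function.RightInverse ginv g) (hginv : ContDiff ℝ 1 ginv)
    (f : ℝ → ℝ) (hf : memDL Sig f) :
    -- Lf ∘ g⁻¹ = (1/2) (σ₀^g)² (f ∘ g⁻¹)'' + ((Lg) ∘ g⁻¹) (f ∘ g⁻¹)',
    -- where σ₀^g = (σ g') ∘ g⁻¹
    ∀ y : ℝ, Lop sigma Sig f (ginv y)
      = 1 / 2 * (sigma (ginv y) * deriv g (ginv y)) ^ 2 * deriv (deriv (f ∘ ginv)) y
        + Lop sigma Sig g (ginv y) * deriv (f ∘ ginv) y := by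
  intro y
  obtain ⟨hf1, hF⟩ := hf
  obtain ⟨hg1, hG⟩ := hg
  have hd_inv : ∀ z, HasDerivAt ginv (deriv g (ginv z))⁻¹ z := fun z =>
    HasDerivAt.of_local_left_inverse hginv.continuous.continuousAt
      (hg1.differentiable one_ne_zero (ginv z)).hasDerivAt (hg' _).ne'
      (Filter.Eventually.of_forall hri)
  have hd_comp : deriv (f ∘ ginv) = fun z => (Real.exp (Sig (ginv z)) * deriv f (ginv z)) /
      (Real.exp (Sig (ginv z)) * deriv g (ginv z)) := by
    funext z
    rw [((hf1.differentiable one_ne_zero (ginv z)).hasDerivAt.comp z (hd_inv z)).deriv,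
      mul_div_mul_left _ _ (Real.exp_pos _).ne', div_eq_mul_inv]
  have hdF := ((hF.differentiable one_ne_zero (ginv y)).hasDerivAt).comp y (hd_inv y)
  have hdG := ((hG.differentiable one_ne_zero (ginv y)).hasDerivAt).comp y (hd_inv y)
  have hG_ne : Real.exp (Sig (ginv y)) * deriv g (ginv y) ≠ 0 :=
    mul_ne_zero (Real.exp_pos _).ne' (hg' _).ne'
  have hd2 := (hdF.div hdG hG_ne).deriv
  have hd2' : deriv (deriv (f ∘ ginv)) y = _ := (congrArg (fun h => deriv h y) hd_comp).trans hd2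
  rw [hd2', hd_comp]
  simp only [Lop, Function.comp_apply, Real.exp_neg]
  have hE_ne := (Real.exp_pos (Sig (ginv y))).ne'
  have hg_ne := (hg' (ginv y)).ne'
  -- The derivatives of `F` and `G` at `g⁻¹ y` are opaque quantities in the remaining identity.
  generalize deriv (fun x => Real.exp (Sig x) * deriv f x) (ginv y) = F'
  generalize deriv (fun x => Real.exp (Sig x) * deriv g x) (ginv y) = G'
  field_simp
  ring
end

section
/- Assume the non-explosion condition. Let g ∈ 𝒟_L be a C¹-diffeomorphism of ℝ onto ℝ with g′(x) > 0 for all x, and let f ∈ 𝒟_L. Then f ∘ g⁻¹ is twice differentiable and its second derivative is given by (f ∘ g⁻¹)″ = [ 2·Lf/(g′² σ²) − 2·Lg·f′/(σ² g′³) ] ∘ g⁻¹. -/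
/-!
The derivatives `f'` and `g'` need not be differentiable, since `Σ` is only continuous, but
`F = e^Σ f'` and `G = e^Σ g'` are. By the chain rule `(f ∘ g⁻¹)' = (f' / g') ∘ g⁻¹`, and the factor
`e^Σ` may be inserted in numerator and denominator: `(f ∘ g⁻¹)' = (F / G) ∘ g⁻¹`. The right-hand
side is differentiable, and the quotient rule gives
`(f ∘ g⁻¹)'' = [(F' G - F G') / (G² g')] ∘ g⁻¹`, which is the formula sought because
`F' = 2 e^Σ Lf / σ²` and `G' = 2 e^Σ Lg / σ²`.
-/

open Real MeasureTheory

theorem second_deriv_comp_diffeo_inv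
    (sigma Sig : ℝ → ℝ) (hsigmac : Continuous sigma) (hSigc : Continuous Sig)
    (hsigma : ∀ x, 0 < sigma x)
    -- non-explosion condition
    (hne₁ : ∫⁻ x in Set.Iic (0:ℝ), ENNReal.ofReal (Real.exp (-Sig x)) = ⊤)
    (hne₂ : ∫⁻ x in Set.Ici (0:ℝ), ENNReal.ofReal (Real.exp (-Sig x)) = ⊤)
    -- g is a C¹-diffeomorphism of ℝ onto ℝ belonging to 𝒟_L, with g' > 0
    (g : ℝ → ℝ) (hg : memDL Sig g) (hgbij : Function.Bijective g)
    (hg' : ∀ x, 0 < deriv g x)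
    (ginv : ℝ → ℝ) (hli : Function.LeftInverse ginv g)
    (hri : Function.RightInverse ginv g) (hginv : ContDiff ℝ 1 ginv)
    (f : ℝ → ℝ) (hf : memDL Sig f) :
    (∀ y, DifferentiableAt ℝ (f ∘ ginv) y) ∧
    (∀ y, DifferentiableAt ℝ (deriv (f ∘ ginv)) y) ∧
    ∀ y, deriv (deriv (f ∘ ginv)) y
      = 2 * Lop sigma Sig f (ginv y) / (deriv g (ginv y) ^ 2 * sigma (ginv y) ^ 2)
        - 2 * Lop sigma Sig g (ginv y) * deriv f (ginv y)
            / (sigma (ginv y) ^ 2 * deriv g (ginv y) ^ 3) := by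
  obtain ⟨hf1, hF⟩ := hf
  obtain ⟨hg1, hG⟩ := hg
  have hdf (x : ℝ) : HasDerivAt f (deriv f x) x :=
    (hf1.differentiable one_ne_zero x).hasDerivAt
  have hdg (x : ℝ) : HasDerivAt g (deriv g x) x :=
    (hg1.differentiable one_ne_zero x).hasDerivAt
  have hdi (y : ℝ) : HasDerivAt ginv (deriv g (ginv y))⁻¹ y :=
    (hdg (ginv y)).of_local_left_inverse hginv.continuous.continuousAt (hg' _).ne'
      (Filter.Eventually.of_forall hri)
  have hcomp (y : ℝ) : HasDerivAt (f ∘ ginv) (deriv f (ginv y) * (deriv g (ginv y))⁻¹) y :=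
    (hdf (ginv y)).comp y (hdi y)
  set F : ℝ → ℝ := fun x => Real.exp (Sig x) * deriv f x with hFdef
  set G : ℝ → ℝ := fun x => Real.exp (Sig x) * deriv g x with hGdef
  have hGne (x : ℝ) : G x ≠ 0 := (mul_pos (Real.exp_pos _) (hg' x)).ne'
  have hderiv : deriv (f ∘ ginv) = fun y => F (ginv y) / G (ginv y) := by
    funext y
    rw [(hcomp y).deriv, hFdef, hGdef, mul_div_mul_left _ _ (Real.exp_ne_zero _), div_eq_mul_inv]
  have hdF (x : ℝ) : HasDerivAt F (deriv F x) x :=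
    (hF.differentiable one_ne_zero x).hasDerivAt
  have hdG (x : ℝ) : HasDerivAt G (deriv G x) x :=
    (hG.differentiable one_ne_zero x).hasDerivAt
  have hsecond (y : ℝ) := ((hdF (ginv y)).div (hdG (ginv y)) (hGne _)).comp y (hdi y)
  have hsecond' (y : ℝ) : HasDerivAt (deriv (f ∘ ginv))
      ((deriv F (ginv y) * G (ginv y) - F (ginv y) * deriv G (ginv y)) / G (ginv y) ^ 2
        * (deriv g (ginv y))⁻¹) y := by
    rw [hderiv]
    exact hsecond y
  refine ⟨fun y => (hcomp y).differentiableAt, fun y => (hsecond' y).differentiableAt, fun y => ?_⟩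
  rw [(hsecond' y).deriv]
  have hLf : Lop sigma Sig f (ginv y)
      = deriv F (ginv y) * Real.exp (-Sig (ginv y)) * sigma (ginv y) ^ 2 / 2 := rfl
  have hLg : Lop sigma Sig g (ginv y)
      = deriv G (ginv y) * Real.exp (-Sig (ginv y)) * sigma (ginv y) ^ 2 / 2 := rfl
  have hFx : F (ginv y) = Real.exp (Sig (ginv y)) * deriv f (ginv y) := rfl
  have hGx : G (ginv y) = Real.exp (Sig (ginv y)) * deriv g (ginv y) := rfl
  rw [hLf, hLg, hFx, hGx, Real.exp_neg]
  have h1 := (hg' (ginv y)).ne'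
  have h2 := (hsigma (ginv y)).ne'
  have h3 := Real.exp_ne_zero (Sig (ginv y))
  -- The derivatives of `F` and `G` enter only as numbers from here on.
  generalize deriv F (ginv y) = a
  generalize deriv G (ginv y) = b
  field_simp
end
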